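/- Let $n \ge 1$, let $A$ be an invertible $n \times n$ real matrix, and let $\Delta > 0$ be an upper bound on the absolute values of all $(n-1) \times (n-1)$ sub-determinants of $A$ (equivalently, on the absolute values of all entries of the adjugate of $A$). Then every column $b_i$ of the adjugate of $A$ satisfies $\|b_i\| \le \sqrt{n}\,\Delta$, and consequently for every index $i$, the Euclidean distance from the row $a_i$ of $A$ to the linear span of the remaining rows $\{a_j : j \ne i\}$ is at least $|\det A| / (\sqrt{n}\,\Delta)$. -/

import Mathlib

open Matrix Metric

theorem EuclideanSpace.norm_le_sqrt_card_mul {ι : Type*} [Fintype ι]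
    (v : EuclideanSpace ℝ ι) {C : ℝ} (hC : 0 ≤ C) (h : ∀ i, |v i| ≤ C) :
    ‖v‖ ≤ Real.sqrt (Fintype.card ι) * C := by
  rw [EuclideanSpace.norm_eq]
  refine Real.sqrt_le_iff.mpr ⟨by positivity, ?_⟩
  rw [mul_pow, Real.sq_sqrt (Nat.cast_nonneg _), ← nsmul_eq_mul]
  refine Finset.sum_le_card_nsmul _ _ _ fun i _ => ?_
  exact pow_le_pow_left₀ (norm_nonneg _) (h i) 2

theorem Matrix.abs_adjugate_le_of_abs_det_submatrix_le {m : ℕ}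
    (A : Matrix (Fin (m + 1)) (Fin (m + 1)) ℝ) {C : ℝ}
    (h : ∀ r c : Fin m → Fin (m + 1), Function.Injective r →
      Function.Injective c → |(A.submatrix r c).det| ≤ C) (i j : Fin (m + 1)) :
    |A.adjugate i j| ≤ C := by
  rw [adjugate_fin_succ_eq_det_submatrix, abs_mul, abs_pow, abs_neg, abs_one, one_pow, one_mul]
  exact h _ _ Fin.succAbove_right_injective Fin.succAbove_right_injective

theorem Matrix.inner_adjugate_col_row {ι : Type*} [Fintype ι] [DecidableEq ι]
    (A : Matrix ι ι ℝ) (i j : ι) :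
    inner ℝ (WithLp.toLp 2 fun k => A.adjugate k i) (WithLp.toLp 2 (A j)) =
      if j = i then A.det else 0 := by
  have h := congrFun (congrFun A.mul_adjugate j) i
  rw [Matrix.mul_apply] at h
  simpa [PiLp.inner_apply, Matrix.one_apply] using h

/-- Cauchy–Schwarz against a vector orthogonal to `s` bounds below the distance to the span
of `s`. -/
theorem abs_inner_le_norm_mul_infDist_span {E : Type*} [NormedAddCommGroup E]
    [InnerProductSpace ℝ E] {s : Set E} {b : E} (hb : ∀ v ∈ s, inner ℝ b v = 0) (x : E) :
    |inner ℝ b x| ≤ ‖b‖ * infDist x (Submodule.span ℝ s : Set E) := by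
  have horth : ∀ y ∈ Submodule.span ℝ s, inner ℝ b y = 0 := fun y hy =>
    (Submodule.span_le (p := LinearMap.ker (innerₛₗ ℝ b))).mpr hb hy
  rcases (norm_nonneg b).eq_or_lt with h0 | hpos
  · simp [norm_eq_zero.mp h0.symm]
  · rw [← div_le_iff₀' hpos, le_infDist ⟨0, Submodule.zero_mem _⟩]
    intro y hy
    rw [div_le_iff₀' hpos, dist_eq_norm]
    calc |inner ℝ b x| = |inner ℝ b (x - y)| := by rw [inner_sub_right, horth y hy, sub_zero]
      _ ≤ ‖b‖ * ‖x - y‖ := abs_real_inner_le_norm _ _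

/-- If all `(n-1) × (n-1)` sub-determinants of an invertible `n × n` real
matrix `A` are bounded in absolute value by `Δ`, then every column of the
adjugate has Euclidean norm at most `√n · Δ`, and the distance from each row
`a i` of `A` to the span of the remaining rows is at least `|det A|/(√n Δ)`. -/
theorem adjugate_column_norm_and_row_distance (n : ℕ) (hn : 1 ≤ n)
    (A : Matrix (Fin n) (Fin n) ℝ) (hA : IsUnit A.det) (Δ : ℝ) (hΔ : 0 < Δ)
    (hsub : ∀ (r c : Fin (n - 1) → Fin n), Function.Injective r →
      Function.Injective c → |(A.submatrix r c).det| ≤ Δ) :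
    (∀ j : Fin n,
      ‖(WithLp.equiv 2 (Fin n → ℝ)).symm (fun i => A.adjugate i j)‖ ≤
        Real.sqrt n * Δ) ∧
    ∀ i : Fin n,
      |A.det| / (Real.sqrt n * Δ) ≤
        Metric.infDist ((WithLp.equiv 2 (Fin n → ℝ)).symm (A i))
          (Submodule.span ℝ
            {v | ∃ j : Fin n, j ≠ i ∧ v = (WithLp.equiv 2 (Fin n → ℝ)).symm (A j)} :
            Set (EuclideanSpace ℝ (Fin n))) := by
  obtain ⟨m, rfl⟩ := Nat.exists_eq_succ_of_ne_zero (Nat.one_le_iff_ne_zero.mp hn)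
  have hcol : ∀ j : Fin (m + 1),
      ‖(WithLp.toLp 2 fun i => A.adjugate i j : EuclideanSpace ℝ (Fin (m + 1)))‖ ≤
        Real.sqrt (m + 1 : ℕ) * Δ := fun j => by
    simpa only [Fintype.card_fin] using EuclideanSpace.norm_le_sqrt_card_mul
      (WithLp.toLp 2 fun i => A.adjugate i j) hΔ.le
      fun i => A.abs_adjugate_le_of_abs_det_submatrix_le hsub i j
  refine ⟨hcol, fun i => ?_⟩
  rw [div_le_iff₀' (by positivity)]
  refine le_trans ?_ (mul_le_mul_of_nonneg_right (hcol i) infDist_nonneg)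
  have hdet := A.inner_adjugate_col_row i i
  rw [if_pos rfl] at hdet
  rw [← hdet]
  refine abs_inner_le_norm_mul_infDist_span ?_ _
  rintro _ ⟨j, hj, rfl⟩
  exact (A.inner_adjugate_col_row i j).trans (if_neg hj)
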